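/- arXiv:1901.03361 — 2 statements merged into one kernel-verified Lean document; each statement's English description precedes it below -/
import Mathlib

section
/- Let D be a lattice of languages closed under marked concatenation, let L, L' ∈ D and a ∈ A, and let K, K' be Bool(D)-covers of L and L' respectively. Then there exists a Bool(D)-cover H of the marked concatenation LaL' such that for every H ∈ H there exist K ∈ K and K' ∈ K' with H ⊆ KaK'. -/
open Set

namespace Paper

abbrev Lang (A : Type) := Set (List A)
abbrev LClass (A : Type) := Set (Set (List A))

variable {A R M : Type}

/-- A lattice of languages: contains `∅` and `A*`, closed under finite union
and finite intersection. -/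
def LangLattice (𝒞 : LClass A) : Prop :=
  (∅ : Lang A) ∈ 𝒞 ∧ (Set.univ : Lang A) ∈ 𝒞 ∧
    (∀ K L : Lang A, K ∈ 𝒞 → L ∈ 𝒞 → K ∪ L ∈ 𝒞) ∧
    (∀ K L : Lang A, K ∈ 𝒞 → L ∈ 𝒞 → K ∩ L ∈ 𝒞)

/-- A Boolean algebra of languages: a lattice closed under complement. -/
def LangBoolAlg (𝒞 : LClass A) : Prop :=
  LangLattice 𝒞 ∧ ∀ L : Lang A, L ∈ 𝒞 → Lᶜ ∈ 𝒞

/-- A class is quotient-closed when it is closed under left and right quotients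
by words. -/
def QuotientClosed (𝒞 : LClass A) : Prop :=
  ∀ L ∈ 𝒞, ∀ w : List A,
    {u : List A | w ++ u ∈ L} ∈ 𝒞 ∧ {u : List A | u ++ w ∈ L} ∈ 𝒞

/-- The canonical preorder `≤_𝒞` associated with a class `𝒞`. -/
def cle (𝒞 : LClass A) (w w' : List A) : Prop := ∀ L ∈ 𝒞, w ∈ L → w' ∈ L

/-- The canonical equivalence `∼_𝒞` associated with a class `𝒞`. -/
def ceq (𝒞 : LClass A) (w w' : List A) : Prop := ∀ L ∈ 𝒞, (w ∈ L ↔ w' ∈ L)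

/-- The `∼_𝒞`-class of the word `w`. -/
def cclass (𝒞 : LClass A) (w : List A) : Lang A := {v | ceq 𝒞 w v}

/-- `D` is a `∼_𝒞`-class. -/
def IsCClass (𝒞 : LClass A) (D : Lang A) : Prop := ∃ w : List A, D = cclass 𝒞 w

/-- Multiplication of `∼_𝒞`-classes (the class of the concatenation of
representatives). -/
def cmul (𝒞 : LClass A) (D E : Lang A) : Lang A :=
  {x | ∃ u ∈ D, ∃ v ∈ E, ceq 𝒞 (u ++ v) x}

/-- Language concatenation. -/
def cat (K L : Lang A) : Lang A := {w | ∃ u ∈ K, ∃ v ∈ L, u ++ v = w}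

/-- Marked concatenation `K a L`. -/
def mcat (K : Lang A) (a : A) (L : Lang A) : Lang A :=
  {w | ∃ u ∈ K, ∃ v ∈ L, u ++ a :: v = w}

/-- Boolean closure: the least Boolean algebra containing `𝒞`. -/
def BoolC (𝒞 : LClass A) : LClass A := ⋂₀ {𝒟 : LClass A | LangBoolAlg 𝒟 ∧ 𝒞 ⊆ 𝒟}

/-- Polynomial closure: the least class containing `𝒞` closed under union and
marked concatenation. -/
def PolC (𝒞 : LClass A) : LClass A :=
  ⋂₀ {𝒟 : LClass A | 𝒞 ⊆ 𝒟 ∧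
    (∀ K L : Lang A, K ∈ 𝒟 → L ∈ 𝒟 → K ∪ L ∈ 𝒟) ∧
    (∀ (K L : Lang A) (a : A), K ∈ 𝒟 → L ∈ 𝒟 → mcat K a L ∈ 𝒟)}

/-- A cover of `L`: a finite set of languages whose union includes `L`. -/
def IsCover (Ks : LClass A) (L : Lang A) : Prop := Ks.Finite ∧ L ⊆ ⋃₀ Ks

/-- A `𝒞`-cover of `L`: a cover all of whose members belong to `𝒞`. -/
def IsCCover (𝒞 Ks : LClass A) (L : Lang A) : Prop := IsCover Ks L ∧ Ks ⊆ 𝒞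

/-- `α : A* → M` is a monoid morphism. -/
def IsMonoidMorphism [Monoid M] (α : List A → M) : Prop :=
  α [] = 1 ∧ ∀ u v : List A, α (u ++ v) = α u * α v

/-- `α` recognizes `L`. -/
def Recognizes [Monoid M] (α : List A → M) (L : Lang A) : Prop :=
  ∃ F : Set M, L = α ⁻¹' F

/-- A language is regular when it is recognized by a monoid morphism into a
finite monoid. -/
def RegularLang (L : Lang A) : Prop :=
  ∃ (N : Type) (_ : Monoid N) (_ : Finite N) (α : List A → N),
    IsMonoidMorphism α ∧ Recognizes α L

/-- The canonical order on a rating set: `r ≤ s` iff `r + s = s`. -/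
def rle [Add R] (r s : R) : Prop := r + s = s

/-- A rating map: maps `∅` to `0` and commutes with binary union. -/
def IsRatingMap [AddCommMonoid R] (ρ : Lang A → R) : Prop :=
  ρ ∅ = 0 ∧ ∀ K L : Lang A, ρ (K ∪ L) = ρ K + ρ L

/-- A nice rating map: the value of any language is a finite sum of values of
its words. -/
def IsNice [AddCommMonoid R] (ρ : Lang A → R) : Prop :=
  ∀ K : Lang A, ∃ l : List (List A), (∀ w ∈ l, w ∈ K) ∧
    ρ K = (l.map fun w => ρ {w}).sum

/-- A multiplicative rating map: also a morphism for concatenation. -/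
def IsMultiplicative [Semiring R] (ρ : Lang A → R) : Prop :=
  ρ ({[]} : Lang A) = 1 ∧ ∀ K L : Lang A, ρ (cat K L) = ρ K * ρ L

/-- An endomorphism of the additive monoid `(R, +)`. -/
def IsAddEndo [AddCommMonoid R] (γ : R → R) : Prop :=
  γ 0 = 0 ∧ ∀ r s : R, γ (r + s) = γ r + γ s

/-- A quasi-multiplicative rating map for the endomorphism `γ`. -/
def IsQuasiMult [Semiring R] (ρ : Lang A → R) (γ : R → R) : Prop :=
  IsAddEndo γ ∧ (∀ q r s : R, γ (q * γ r * s) = γ (q * r * s)) ∧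
    ∀ K L : Lang A, ρ (cat K L) = γ (ρ K * ρ L)

/-- The `ρ`-imprint of a set of languages. -/
def imprint [Add R] (ρ : Lang A → R) (Ks : LClass A) : Set R :=
  {r | ∃ K ∈ Ks, rle r (ρ K)}

/-- The `𝒟`-optimal `ρ`-imprint on `L` (the imprint of any optimal `𝒟`-cover
of `L`, i.e. the intersection of the imprints of all `𝒟`-covers of `L`). -/
def optImprint [Add R] (𝒟 : LClass A) (ρ : Lang A → R) (L : Lang A) : Set R :=
  {r | ∀ Ks : LClass A, IsCCover 𝒟 Ks L → r ∈ imprint ρ Ks}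

/-- Downset operation on subsets of a rating set. -/
def dclos [Add R] (U : Set R) : Set R := {r | ∃ s ∈ U, rle r s}

/-- Pointwise multiplication of subsets of a rating set. -/
def smul [Mul R] (U V : Set R) : Set R := {x | ∃ u ∈ U, ∃ v ∈ V, u * v = x}

/-!
Let `F ⊆ 𝒟` be a finite family containing `L` and `L'` and saturating every member of the two
given covers. The *cone* of `u` is the set of all `v` with `u ≤_F v`; cones of words of `L` or
`L'` are finite intersections of members of `𝒟`, so the finite family `G` of all
`cone u · a · cone v` with `u ∈ L` and `v ∈ L'` lies in `Bool(𝒟)`, and the `∼_G`-classes of the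
words of `LaL'` form a `Bool(𝒟)`-cover of it. Given such a word `w`, choose a factorization
`w = uav` with `u ∈ L`, `v ∈ L'` that is maximal for `≤_F`. If `x ∼_G w`, then `x = yaz` with
`u ≤_F y` and `v ≤_F z`; going back from `x` to `w` yields a factorization `w = u'av'` with
`y ≤_F u'` and `z ≤_F v'`. By maximality `u ∼_F y` and `v ∼_F z`, so `y` and `z` lie in the same
cover members as `u` and `v`.
-/

theorem cle_refl (𝒞 : LClass A) (w : List A) : cle 𝒞 w w := fun _ _ hw => hw

theorem cle_trans {𝒞 : LClass A} {u v w : List A} (huv : cle 𝒞 u v) (hvw : cle 𝒞 v w) :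
    cle 𝒞 u w :=
  fun L hL hu => hvw L hL (huv L hL hu)

theorem ceq_of_cle_of_cle {𝒞 : LClass A} {u v : List A} (huv : cle 𝒞 u v) (hvu : cle 𝒞 v u) :
    ceq 𝒞 u v :=
  fun L hL => ⟨huv L hL, hvu L hL⟩

theorem mcat_mono {K K' L L' : Lang A} (a : A) (hK : K ⊆ K') (hL : L ⊆ L') :
    mcat K a L ⊆ mcat K' a L' :=
  fun _ ⟨u, hu, v, hv, huv⟩ => ⟨u, hK hu, v, hL hv, huv⟩

/-- The upward closure of the word `w` for the canonical preorder `≤_𝒞`: the least intersection of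
members of `𝒞` containing `w`. -/
def cone (𝒞 : LClass A) (w : List A) : Lang A := {v | cle 𝒞 w v}

theorem cone_eq_sInter (𝒞 : LClass A) (w : List A) : cone 𝒞 w = ⋂₀ {L ∈ 𝒞 | w ∈ L} := by
  ext v
  simp only [cone, cle, mem_ofPred_eq, mem_sInter, and_imp]

theorem cone_subset_cone_iff {𝒞 : LClass A} {u v : List A} :
    cone 𝒞 v ⊆ cone 𝒞 u ↔ cle 𝒞 u v :=
  ⟨fun h => h (cle_refl 𝒞 v), fun huv _ hvw => cle_trans huv hvw⟩

theorem finite_range_cone {F : LClass A} (hF : F.Finite) : (range (cone F)).Finite := by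
  refine (hF.finite_subsets.image sInter).subset ?_
  rintro _ ⟨w, rfl⟩
  exact ⟨{L ∈ F | w ∈ L}, sep_subset _ _, (cone_eq_sInter F w).symm⟩

theorem cone_mem_of_infClosed {𝒟 F : LClass A} (h𝒟 : InfClosed 𝒟) (hF : F.Finite) (hF𝒟 : F ⊆ 𝒟)
    {L : Lang A} (hL : L ∈ F) {w : List A} (hw : w ∈ L) : cone F w ∈ 𝒟 := by
  rw [cone_eq_sInter]
  exact h𝒟.sInf_mem_of_nonempty (hF.sep _) ⟨L, hL, hw⟩ ((sep_subset _ _).trans hF𝒟)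

theorem cclass_eq_cone_union_image_compl (𝒞 : LClass A) (w : List A) :
    cclass 𝒞 w = cone (𝒞 ∪ compl '' 𝒞) w := by
  ext v
  constructor
  · rintro hwv _ (hL | ⟨L, hL, rfl⟩)
    · exact (hwv _ hL).1
    · exact mt (hwv L hL).2
  · exact fun hwv L hL => ⟨hwv L (.inl hL), not_imp_not.1 (hwv Lᶜ (.inr ⟨L, hL, rfl⟩))⟩

theorem finite_range_cclass {G : LClass A} (hG : G.Finite) : (range (cclass G)).Finite := by
  simpa only [funext (cclass_eq_cone_union_image_compl G)] using
    finite_range_cone (hG.union (hG.image compl))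

theorem cclass_mem_of_langBoolAlg {ℬ G : LClass A} (hℬ : LangBoolAlg ℬ) (hG : G.Finite)
    (hGℬ : G ⊆ ℬ) (w : List A) : cclass G w ∈ ℬ := by
  obtain ⟨⟨-, huniv, -, hinter⟩, hcompl⟩ := hℬ
  have hinf : InfClosed ℬ := fun K hK L hL => hinter K L hK hL
  have hunion : G ∪ compl '' G ⊆ ℬ :=
    union_subset hGℬ (image_subset_iff.2 fun L hL => hcompl L (hGℬ hL))
  rw [cclass_eq_cone_union_image_compl, cone_eq_sInter]
  exact hinf.sInf_mem ((hG.union (hG.image compl)).sep _) huniv ((sep_subset _ _).trans hunion)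

theorem isCCover_image_cclass {ℬ G : LClass A} (hℬ : LangBoolAlg ℬ) (hG : G.Finite)
    (hGℬ : G ⊆ ℬ) (L : Lang A) : IsCCover ℬ (cclass G '' L) L :=
  ⟨⟨(finite_range_cclass hG).subset (image_subset_range _ _),
      fun w hw => ⟨cclass G w, mem_image_of_mem _ hw, fun _ _ => Iff.rfl⟩⟩,
    image_subset_iff.2 fun w _ => cclass_mem_of_langBoolAlg hℬ hG hGℬ w⟩

theorem langBoolAlg_boolC (𝒟 : LClass A) : LangBoolAlg (BoolC 𝒟) := by
  refine ⟨⟨?empty, ?univ, ?union, ?inter⟩, ?compl⟩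
  case empty => exact fun ℬ hℬ => hℬ.1.1.1
  case univ => exact fun ℬ hℬ => hℬ.1.1.2.1
  case union => exact fun K L hK hL ℬ hℬ => hℬ.1.1.2.2.1 K L (hK ℬ hℬ) (hL ℬ hℬ)
  case inter => exact fun K L hK hL ℬ hℬ => hℬ.1.1.2.2.2 K L (hK ℬ hℬ) (hL ℬ hℬ)
  case compl => exact fun K hK ℬ hℬ => hℬ.1.2 K (hK ℬ hℬ)

theorem subset_boolC (𝒟 : LClass A) : 𝒟 ⊆ BoolC 𝒟 := fun _ hL _ hℬ => hℬ.2 hL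

/-- `K` is a union of `∼_𝒞`-classes. Every language of `Bool(𝒟)` is saturated by a finite part of
`𝒟`. -/
def IsSaturated (𝒞 : LClass A) (K : Lang A) : Prop :=
  ∀ ⦃u v : List A⦄, ceq 𝒞 u v → (u ∈ K ↔ v ∈ K)

theorem IsSaturated.mono {𝒞 𝒞' : LClass A} {K : Lang A} (hK : IsSaturated 𝒞 K) (h : 𝒞 ⊆ 𝒞') :
    IsSaturated 𝒞' K :=
  fun _ _ huv => hK fun L hL => huv L (h hL)

theorem IsSaturated.cclass_subset {𝒞 : LClass A} {K : Lang A} (hK : IsSaturated 𝒞 K)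
    {w : List A} (hw : w ∈ K) : cclass 𝒞 w ⊆ K :=
  fun _ hwv => (hK hwv).1 hw

theorem langBoolAlg_setOf_exists_finite_isSaturated (𝒟 : LClass A) :
    LangBoolAlg {K : Lang A | ∃ F ⊆ 𝒟, F.Finite ∧ IsSaturated F K} := by
  refine ⟨⟨?empty, ?univ, ?union, ?inter⟩, ?compl⟩
  case empty => exact ⟨∅, empty_subset _, finite_empty, fun _ _ _ => Iff.rfl⟩
  case univ => exact ⟨∅, empty_subset _, finite_empty, fun _ _ _ => Iff.rfl⟩
  case union =>
    rintro K L ⟨F, hF𝒟, hF, hK⟩ ⟨G, hG𝒟, hG, hL⟩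
    exact ⟨F ∪ G, union_subset hF𝒟 hG𝒟, hF.union hG, fun _ _ huv =>
      or_congr (hK.mono subset_union_left huv) (hL.mono subset_union_right huv)⟩
  case inter =>
    rintro K L ⟨F, hF𝒟, hF, hK⟩ ⟨G, hG𝒟, hG, hL⟩
    exact ⟨F ∪ G, union_subset hF𝒟 hG𝒟, hF.union hG, fun _ _ huv =>
      and_congr (hK.mono subset_union_left huv) (hL.mono subset_union_right huv)⟩
  case compl =>
    rintro K ⟨F, hF𝒟, hF, hK⟩
    exact ⟨F, hF𝒟, hF, fun _ _ huv => not_congr (hK huv)⟩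

theorem exists_finite_isSaturated_of_mem_boolC {𝒟 : LClass A} {K : Lang A} (hK : K ∈ BoolC 𝒟) :
    ∃ F ⊆ 𝒟, F.Finite ∧ IsSaturated F K :=
  hK _ ⟨langBoolAlg_setOf_exists_finite_isSaturated 𝒟, fun L hL =>
    ⟨{L}, singleton_subset_iff.2 hL, finite_singleton L, fun _ _ huv => huv L rfl⟩⟩

theorem exists_finite_forall_isSaturated {𝒟 Ks : LClass A} (hKs : Ks.Finite)
    (hKs𝒟 : Ks ⊆ BoolC 𝒟) : ∃ F ⊆ 𝒟, F.Finite ∧ ∀ K ∈ Ks, IsSaturated F K := by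
  choose! F hF𝒟 hF hsat using
    fun K (hK : K ∈ Ks) => exists_finite_isSaturated_of_mem_boolC (hKs𝒟 hK)
  exact ⟨⋃ K ∈ Ks, F K, iUnion₂_subset hF𝒟, hKs.biUnion hF,
    fun K hK => (hsat K hK).mono (subset_biUnion_of_mem (u := F) hK)⟩

theorem finite_setOf_append_cons_eq (a : A) (w : List A) :
    {p : List A × List A | p.1 ++ a :: p.2 = w}.Finite := by
  refine (w.inits.finite_toSet.prod w.tails.finite_toSet).subset ?_
  rintro ⟨u, v⟩ rfl
  exact ⟨(List.mem_inits _ _).2 (List.prefix_append _ _),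
    (List.mem_tails _ _).2 ⟨u ++ [a], by simp⟩⟩

theorem exists_cle_maximal_factorization (F : LClass A) {L L' : Lang A} {a : A} {w : List A}
    (hw : w ∈ mcat L a L') :
    ∃ u ∈ L, ∃ v ∈ L', u ++ a :: v = w ∧
      ∀ u' ∈ L, ∀ v' ∈ L', u' ++ a :: v' = w → cle F u u' → cle F v v' →
        cle F u' u ∧ cle F v' v := by
  let factorizations : Set (List A × List A) :=
    {p | p.1 ++ a :: p.2 = w} ∩ {p | p.1 ∈ L ∧ p.2 ∈ L'}
  have hfinite : factorizations.Finite := (finite_setOf_append_cons_eq a w).inter_of_left _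
  have hnonempty : factorizations.Nonempty := by
    obtain ⟨u, hu, v, hv, huv⟩ := hw
    exact ⟨(u, v), huv, hu, hv⟩
  -- Larger words have smaller cones.
  obtain ⟨⟨u, v⟩, ⟨huv, hu, hv⟩, hmin⟩ :=
    hfinite.exists_minimalFor (fun p => (cone F p.1, cone F p.2)) _ hnonempty
  refine ⟨u, hu, v, hv, huv, fun u' hu' v' hv' huv' huu' hvv' => ?_⟩
  have hle := hmin (j := (u', v')) ⟨huv', hu', hv'⟩
    ⟨cone_subset_cone_iff.2 huu', cone_subset_cone_iff.2 hvv'⟩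
  exact ⟨cone_subset_cone_iff.1 hle.1, cone_subset_cone_iff.1 hle.2⟩

/-- The marked concatenations `P a Q` of a `≤_F`-cone `P` of a word of `L` with a `≤_F`-cone `Q`
of a word of `L'`. The equivalence `∼` of this family controls the `∼_F`-classes of both factors
of a well-chosen factorization. -/
def coneMcats (F : LClass A) (L : Lang A) (a : A) (L' : Lang A) : LClass A :=
  image2 (fun P Q => mcat P a Q) (cone F '' L) (cone F '' L')

theorem finite_coneMcats {F : LClass A} (hF : F.Finite) (L : Lang A) (a : A) (L' : Lang A) :
    (coneMcats F L a L').Finite :=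
  have hcones (L : Lang A) : (cone F '' L).Finite :=
    (finite_range_cone hF).subset (image_subset_range _ _)
  (hcones L).image2 _ (hcones L')

theorem exists_factorization_of_cle_coneMcats {F : LClass A} {L L' : Lang A} {a : A}
    {u v x : List A} (hu : u ∈ L) (hv : v ∈ L')
    (hx : cle (coneMcats F L a L') (u ++ a :: v) x) :
    ∃ y z, y ++ a :: z = x ∧ cle F u y ∧ cle F v z := by
  obtain ⟨y, huy, z, hvz, hyz⟩ := hx (mcat (cone F u) a (cone F v))
    (mem_image2_of_mem (mem_image_of_mem _ hu) (mem_image_of_mem _ hv))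
    ⟨u, cle_refl F u, v, cle_refl F v, rfl⟩
  exact ⟨y, z, hyz, huy, hvz⟩

theorem exists_cclass_coneMcats_subset_mcat {F : LClass A} {L L' : Lang A} (hL : L ∈ F)
    (hL' : L' ∈ F) {a : A} {w : List A} (hw : w ∈ mcat L a L') :
    ∃ u ∈ L, ∃ v ∈ L',
      cclass (coneMcats F L a L') w ⊆ mcat (cclass F u) a (cclass F v) := by
  obtain ⟨u, hu, v, hv, rfl, hmax⟩ := exists_cle_maximal_factorization F hw
  refine ⟨u, hu, v, hv, fun x hx => ?_⟩
  obtain ⟨y, z, rfl, huy, hvz⟩ :=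
    exists_factorization_of_cle_coneMcats hu hv fun M hM => (hx M hM).1
  have hy : y ∈ L := huy L hL hu
  have hz : z ∈ L' := hvz L' hL' hv
  obtain ⟨u', v', huv', hyu', hzv'⟩ :=
    exists_factorization_of_cle_coneMcats hy hz fun M hM => (hx M hM).2
  obtain ⟨hu'u, hv'v⟩ := hmax u' (hyu' L hL hy) v' (hzv' L' hL' hz) huv'
    (cle_trans huy hyu') (cle_trans hvz hzv')
  exact ⟨y, ceq_of_cle_of_cle huy (cle_trans hyu' hu'u),
    z, ceq_of_cle_of_cle hvz (cle_trans hzv' hv'v), rfl⟩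

theorem coneMcats_subset {𝒟 ℬ F : LClass A} {a : A} (h𝒟 : InfClosed 𝒟)
    (hmcat : ∀ K ∈ 𝒟, ∀ L ∈ 𝒟, mcat K a L ∈ ℬ) (hF : F.Finite) (hF𝒟 : F ⊆ 𝒟)
    {L L' : Lang A} (hL : L ∈ F) (hL' : L' ∈ F) : coneMcats F L a L' ⊆ ℬ := by
  rintro _ ⟨_, ⟨u, hu, rfl⟩, _, ⟨v, hv, rfl⟩, rfl⟩
  exact hmcat _ (cone_mem_of_infClosed h𝒟 hF hF𝒟 hL hu) _
    (cone_mem_of_infClosed h𝒟 hF hF𝒟 hL' hv)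

theorem statement8_general (𝒟 : LClass A) (h𝒟 : InfClosed 𝒟) (a : A)
    (hmcat : ∀ K ∈ 𝒟, ∀ L ∈ 𝒟, mcat K a L ∈ BoolC 𝒟)
    (L L' : Lang A) (hL : L ∈ 𝒟) (hL' : L' ∈ 𝒟) (Ks Ks' : LClass A)
    (hKs : IsCCover (BoolC 𝒟) Ks L) (hKs' : IsCCover (BoolC 𝒟) Ks' L') :
    ∃ Hs : LClass A, IsCCover (BoolC 𝒟) Hs (mcat L a L') ∧
      ∀ H ∈ Hs, ∃ K ∈ Ks, ∃ K' ∈ Ks', H ⊆ mcat K a K' := by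
  obtain ⟨⟨hKsfin, hLKs⟩, hKs𝒟⟩ := hKs
  obtain ⟨⟨hKs'fin, hLKs'⟩, hKs'𝒟⟩ := hKs'
  obtain ⟨F₀, hF₀𝒟, hF₀, hsat⟩ :=
    exists_finite_forall_isSaturated (hKsfin.union hKs'fin) (union_subset hKs𝒟 hKs'𝒟)
  let F : LClass A := insert L (insert L' F₀)
  have hF : F.Finite := (hF₀.insert L').insert L
  have hF𝒟 : F ⊆ 𝒟 := insert_subset hL (insert_subset hL' hF₀𝒟)
  have hLF : L ∈ F := mem_insert _ _
  have hL'F : L' ∈ F := mem_insert_of_mem _ (mem_insert _ _)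
  have hF₀F : F₀ ⊆ F := (subset_insert _ _).trans (subset_insert _ _)
  refine ⟨cclass (coneMcats F L a L') '' mcat L a L', isCCover_image_cclass (langBoolAlg_boolC 𝒟)
    (finite_coneMcats hF L a L') (coneMcats_subset h𝒟 hmcat hF hF𝒟 hLF hL'F) _, ?_⟩
  rintro _ ⟨w, hw, rfl⟩
  obtain ⟨u, hu, v, hv, hsubset⟩ := exists_cclass_coneMcats_subset_mcat hLF hL'F hw
  obtain ⟨K, hK, huK⟩ := hLKs hu
  obtain ⟨K', hK', hvK'⟩ := hLKs' hv
  exact ⟨K, hK, K', hK', hsubset.trans (mcat_mono a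
    (((hsat K (.inl hK)).mono hF₀F).cclass_subset huK)
    (((hsat K' (.inr hK')).mono hF₀F).cclass_subset hvK'))⟩

/-- Weak marked concatenation principle for Boolean closure. -/
theorem statement8 {A : Type} [Fintype A] (𝒟 : LClass A) (hlat : LangLattice 𝒟)
    (hmcat : ∀ (K L : Lang A) (a : A), K ∈ 𝒟 → L ∈ 𝒟 → mcat K a L ∈ 𝒟)
    (L L' : Lang A) (hL : L ∈ 𝒟) (hL' : L' ∈ 𝒟) (a : A)
    (Ks Ks' : LClass A)
    (hKs : IsCCover (BoolC 𝒟) Ks L) (hKs' : IsCCover (BoolC 𝒟) Ks' L') :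
    ∃ Hs : LClass A, IsCCover (BoolC 𝒟) Hs (mcat L a L') ∧
      ∀ H ∈ Hs, ∃ K ∈ Ks, ∃ K' ∈ Ks', H ⊆ mcat K a K' :=
  statement8_general 𝒟 (fun K hK L hL => hlat.2.2.2 K L hK hL) a
    (fun K hK L hL => subset_boolC 𝒟 (hmcat K L a hK hL)) L L' hL hL' Ks Ks' hKs hKs'

end Paper
end

section
/- Let D be a quotient-closed lattice, whose members are all regular languages, closed under concatenation; let α : A* → M be a monoid morphism into a finite monoid, and let ρ : 2^{A*} → R be a rating map quasi-multiplicative for an endomorphism γ of (R,+). Then the rating map τ_{D,α,ρ} : 2^{A*} → 2^{M×R} is quasi-multiplicative for the endomorphism μ of (2^{M×R}, ∪) defined by μ(T) = ↓_R {(s, γ(r)) : (s,r) ∈ T}. -/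
open Set

namespace Paper

variable {A R M : Type}

/-- The pointed nested rating map `K ↦ {(s, r) : r ∈ I_𝒟[α⁻¹(s) ∩ K, ρ]}`. -/
def tauDp [Add R] (𝒟 : LClass A) (α : List A → M) (ρ : Lang A → R) :
    Lang A → Set (M × R) :=
  fun K => {p | p.2 ∈ optImprint 𝒟 ρ (α ⁻¹' {p.1} ∩ K)}

/-- Componentwise multiplication of subsets of `M × R`. -/
def pmul [Mul M] [Mul R] (T U : Set (M × R)) : Set (M × R) :=
  {p | ∃ t ∈ T, ∃ u ∈ U, (t.1 * u.1, t.2 * u.2) = p}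

/-- The endomorphism `μ(T) = ↓_R {(s, γ(r)) : (s, r) ∈ T}` of `(2^{M×R}, ∪)`. -/
def muMap [Add R] (γ : R → R) (T : Set (M × R)) : Set (M × R) :=
  {p | ∃ q : R, (p.1, q) ∈ T ∧ rle p.2 (γ q)}

/-!
For `τ(K₁K₂) ⊆ μ(τ(K₁)τ(K₂))`, concatenating members of optimal `𝒟`-covers of the languages
`α⁻¹(s₁) ∩ K₁` and `α⁻¹(s₂) ∩ K₂`, over all factorizations `s = s₁s₂`, gives a `𝒟`-cover of
`α⁻¹(s) ∩ K₁K₂`.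

For the converse, let `rᵢ ∈ I_𝒟[Lᵢ, ρ]` and let `Ks` be a `𝒟`-cover of `L₁L₂`. For every `u ∈ L₁`
the quotients `u⁻¹K` with `K ∈ Ks` form a `𝒟`-cover of `L₂`, so `r₂ ≤ ρ(Q)` for one such `Q = u⁻¹K`,
and `u` belongs to the residual `K / Q = {x : xQ ⊆ K}`. A residual of a regular language is the
intersection of finitely many right quotients, and there are finitely many of them. Hence the
residuals `K / Q` with `K ∈ Ks` and `r₂ ≤ ρ(Q)` form a `𝒟`-cover of `L₁`, one of them satisfies
`r₁ ≤ ρ(K / Q)`, and `γ(r₁r₂) ≤ ρ((K / Q)Q) ≤ ρ(K)`.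
-/

theorem rle.trans [AddSemigroup R] {a b c : R} (hab : rle a b) (hbc : rle b c) : rle a c := by
  unfold rle at *
  rw [← hbc, ← add_assoc, hab]

instance [AddSemigroup R] : Trans (rle (R := R)) rle rle := ⟨rle.trans⟩

theorem rle.mul [NonUnitalNonAssocSemiring R] {a b c d : R} (hab : rle a b) (hcd : rle c d) :
    rle (a * c) (b * d) :=
  calc
    rle (a * c) (a * d) := by rw [rle, ← mul_add, hcd]
    rle _ (b * d) := by rw [rle, ← add_mul, hab]

theorem IsAddEndo.rle_map [AddCommMonoid R] {γ : R → R} (hγ : IsAddEndo γ) {a b : R}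
    (hab : rle a b) : rle (γ a) (γ b) := by
  rw [rle, ← hγ.2, hab]

theorem IsRatingMap.rle_of_subset [AddCommMonoid R] {ρ : Lang A → R} (hρ : IsRatingMap ρ)
    {K L : Lang A} (hKL : K ⊆ L) : rle (ρ K) (ρ L) := by
  rw [rle, ← hρ.2, union_eq_self_of_subset_left hKL]

theorem LangLattice.finiteInter {𝒟 : LClass A} (hlat : LangLattice 𝒟) : FiniteInter 𝒟 where
  univ_mem := hlat.2.1
  inter_mem K hK L hL := hlat.2.2.2 K L hK hL

section Imprints

variable {𝒟 Ks Ls : LClass A} {K L L₁ L₂ : Lang A}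

theorem IsCCover.mono (hL : L₁ ⊆ L₂) (hKs : IsCCover 𝒟 Ks L₂) : IsCCover 𝒟 Ks L₁ :=
  ⟨⟨hKs.1.1, hL.trans hKs.1.2⟩, hKs.2⟩

theorem IsCCover.image2_inter (hinter : FiniteInter 𝒟) (hKs : IsCCover 𝒟 Ks L)
    (hLs : IsCCover 𝒟 Ls L) : IsCCover 𝒟 (image2 (· ∩ ·) Ks Ls) L := by
  refine ⟨⟨hKs.1.1.image2 _ hLs.1.1, fun w hw => ?_⟩, ?_⟩
  · obtain ⟨K, hK, hwK⟩ := hKs.1.2 hw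
    obtain ⟨K', hK', hwK'⟩ := hLs.1.2 hw
    exact ⟨K ∩ K', mem_image2_of_mem hK hK', hwK, hwK'⟩
  · rintro _ ⟨K, hK, K', hK', rfl⟩
    exact hinter.inter_mem (hKs.2 hK) (hLs.2 hK')

theorem optImprint_mono [Add R] {ρ : Lang A → R} (hL : L₁ ⊆ L₂) :
    optImprint 𝒟 ρ L₁ ⊆ optImprint 𝒟 ρ L₂ :=
  fun _ hr Ks hKs => hr Ks (hKs.mono hL)

theorem mem_optImprint_of_rle [AddSemigroup R] {ρ : Lang A → R} {q r : R} (hqr : rle q r)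
    (hr : r ∈ optImprint 𝒟 ρ L) : q ∈ optImprint 𝒟 ρ L := by
  intro Ks hKs
  obtain ⟨K, hK, hrK⟩ := hr Ks hKs
  exact ⟨K, hK, hqr.trans hrK⟩

variable [AddCommMonoid R] {ρ : Lang A → R}

theorem IsRatingMap.mem_imprint (hρ : IsRatingMap ρ) (hK : K ∈ Ks) : ρ K ∈ imprint ρ Ks :=
  ⟨K, hK, hρ.rle_of_subset Subset.rfl⟩

theorem IsRatingMap.imprint_image2_inter_subset (hρ : IsRatingMap ρ) :
    imprint ρ (image2 (· ∩ ·) Ks Ls) ⊆ imprint ρ Ks ∩ imprint ρ Ls := by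
  rintro r ⟨_, ⟨K, hK, K', hK', rfl⟩, hr⟩
  exact ⟨⟨K, hK, hr.trans (hρ.rle_of_subset inter_subset_left)⟩,
    ⟨K', hK', hr.trans (hρ.rle_of_subset inter_subset_right)⟩⟩

-- A cover with minimal imprint is optimal, because refining it by another cover cannot shrink
-- its imprint.
theorem exists_isCCover_imprint_subset_optImprint [Finite R] (hinter : FiniteInter 𝒟)
    (hρ : IsRatingMap ρ) (L : Lang A) :
    ∃ Ks, IsCCover 𝒟 Ks L ∧ imprint ρ Ks ⊆ optImprint 𝒟 ρ L := by
  have hne : {Ks | IsCCover 𝒟 Ks L}.Nonempty :=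
    ⟨{univ}, ⟨finite_singleton _, by simp⟩, singleton_subset_iff.2 hinter.univ_mem⟩
  obtain ⟨Ks, hKs, hmin⟩ := (toFinite _).exists_minimalFor' (imprint ρ) _ hne
  refine ⟨Ks, hKs, fun r hr Ls hLs => ?_⟩
  have href := hρ.imprint_image2_inter_subset (Ks := Ks) (Ls := Ls)
  exact (href (hmin (hKs.image2_inter hinter hLs) (fun _ hq => (href hq).1) hr)).2

end Imprints

section Residuals

/-- The left quotient `w⁻¹L`, which consists of the words completing `w` to a word of `L`. -/
def leftQuotient (L : Lang A) (w : List A) : Lang A := {u | w ++ u ∈ L}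

/-- The right quotient `Lw⁻¹`, which consists of the words completed by `w` to a word of `L`. -/
def rightQuotient (L : Lang A) (w : List A) : Lang A := {u | u ++ w ∈ L}

/-- The residual `K / Q`: the largest language `H` such that `HQ ⊆ K`. -/
def rightResidual (K Q : Lang A) : Lang A := {u | ∀ v ∈ Q, u ++ v ∈ K}

/-- The residuals of members of `Ks` by languages of rating at least `r`. When `Ks` covers `L₁L₂`
and `r ∈ I_𝒟[L₂, ρ]`, they cover `L₁`. -/
def residualCover [Add R] (ρ : Lang A → R) (r : R) (Ks : LClass A) : LClass A :=
  ⋃ K ∈ Ks, rightResidual K '' {Q | rle r (ρ Q)}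

variable {𝒟 Ks : LClass A} {K L₁ L₂ : Lang A}

theorem cat_rightResidual_subset (K Q : Lang A) : cat (rightResidual K Q) Q ⊆ K := by
  rintro _ ⟨u, hu, v, hv, rfl⟩
  exact hu v hv

theorem rightResidual_eq_sInter (K Q : Lang A) :
    rightResidual K Q = ⋂₀ (rightQuotient K '' Q) := by
  ext u
  simp [rightResidual, rightQuotient]

theorem RegularLang.finite_range_rightQuotient (hK : RegularLang K) :
    (range (rightQuotient K)).Finite := by
  obtain ⟨N, _, _, β, hβ, F, rfl⟩ := hK
  refine (finite_range fun n : N => {u : List A | β u * n ∈ F}).subset ?_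
  rintro _ ⟨w, rfl⟩
  exact ⟨β w, by ext u; simp [rightQuotient, hβ.2]⟩

theorem RegularLang.finite_range_rightResidual (hK : RegularLang K) :
    (range (rightResidual K)).Finite := by
  refine (hK.finite_range_rightQuotient.finite_subsets.image sInter).subset ?_
  rintro _ ⟨Q, rfl⟩
  exact ⟨_, image_subset_range _ Q, (rightResidual_eq_sInter K Q).symm⟩

theorem RegularLang.rightResidual_mem (hK : RegularLang K) (hinter : FiniteInter 𝒟)
    (hquot : ∀ w, rightQuotient K w ∈ 𝒟) (Q : Lang A) : rightResidual K Q ∈ 𝒟 := by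
  have hfin : (rightQuotient K '' Q).Finite :=
    hK.finite_range_rightQuotient.subset (image_subset_range _ _)
  rw [rightResidual_eq_sInter, ← hfin.coe_toFinset]
  refine hinter.finiteInter_mem _ ?_
  rw [hfin.coe_toFinset]
  exact image_subset_iff.2 fun w _ => hquot w

theorem IsCCover.image_leftQuotient (hqc : QuotientClosed 𝒟) (hKs : IsCCover 𝒟 Ks (cat L₁ L₂))
    {u : List A} (hu : u ∈ L₁) : IsCCover 𝒟 ((leftQuotient · u) '' Ks) L₂ := by
  refine ⟨⟨hKs.1.1.image _, fun v hv => ?_⟩, ?_⟩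
  · obtain ⟨K, hK, huv⟩ := hKs.1.2 ⟨u, hu, v, hv, rfl⟩
    exact ⟨_, mem_image_of_mem _ hK, huv⟩
  · rintro _ ⟨K, hK, rfl⟩
    exact (hqc K (hKs.2 hK) u).1

theorem IsCCover.residualCover [Add R] {ρ : Lang A → R} {r : R} (hinter : FiniteInter 𝒟)
    (hqc : QuotientClosed 𝒟) (hreg : ∀ L ∈ 𝒟, RegularLang L)
    (hKs : IsCCover 𝒟 Ks (cat L₁ L₂)) (hr : r ∈ optImprint 𝒟 ρ L₂) :
    IsCCover 𝒟 (residualCover ρ r Ks) L₁ := by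
  refine ⟨⟨?_, fun u hu => ?_⟩, ?_⟩
  · exact hKs.1.1.biUnion fun K hK =>
      (hreg K (hKs.2 hK)).finite_range_rightResidual.subset (image_subset_range _ _)
  · obtain ⟨_, ⟨K, hK, rfl⟩, hrQ⟩ := hr _ (hKs.image_leftQuotient hqc hu)
    exact ⟨rightResidual K (leftQuotient K u), mem_biUnion hK (mem_image_of_mem _ hrQ),
      fun v hv => hv⟩
  · refine iUnion₂_subset fun K hK => ?_
    rintro _ ⟨Q, -, rfl⟩
    exact (hreg K (hKs.2 hK)).rightResidual_mem hinter (fun w => (hqc K (hKs.2 hK) w).2) Q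

theorem map_mul_mem_optImprint_cat [NonUnitalNonAssocSemiring R] {ρ : Lang A → R} {γ : R → R}
    {r₁ r₂ : R} (hinter : FiniteInter 𝒟) (hqc : QuotientClosed 𝒟)
    (hreg : ∀ L ∈ 𝒟, RegularLang L) (hρ : IsRatingMap ρ) (hγ : IsAddEndo γ)
    (hργ : ∀ K L : Lang A, ρ (cat K L) = γ (ρ K * ρ L))
    (hr₁ : r₁ ∈ optImprint 𝒟 ρ L₁) (hr₂ : r₂ ∈ optImprint 𝒟 ρ L₂) :
    γ (r₁ * r₂) ∈ optImprint 𝒟 ρ (cat L₁ L₂) := by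
  intro Ks hKs
  obtain ⟨_, hH, hr₁H⟩ := hr₁ _ (hKs.residualCover hinter hqc hreg hr₂)
  obtain ⟨K, hK, Q, hr₂Q, rfl⟩ := mem_iUnion₂.1 hH
  refine ⟨K, hK, ?_⟩
  calc
    rle (γ (r₁ * r₂)) (γ (ρ (rightResidual K Q) * ρ Q)) := hγ.rle_map (hr₁H.mul hr₂Q)
    _ = ρ (cat (rightResidual K Q) Q) := (hργ _ _).symm
    rle _ (ρ K) := hρ.rle_of_subset (cat_rightResidual_subset K Q)

end Residuals

theorem muMap_empty [Add R] (γ : R → R) : muMap γ (∅ : Set (M × R)) = ∅ := by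
  ext p
  simp [muMap]

theorem muMap_union [Add R] (γ : R → R) (T U : Set (M × R)) :
    muMap γ (T ∪ U) = muMap γ T ∪ muMap γ U := by
  ext p
  simp only [muMap, mem_union, mem_ofPred_eq, or_and_right, exists_or]

theorem mem_muMap_pmul_pmul [Mul M] [NonUnitalSemiring R] {γ : R → R} {T U V : Set (M × R)}
    {s : M} {r : R} :
    (s, r) ∈ muMap γ (pmul T (pmul U V)) ↔
      ∃ t ∈ T, ∃ u ∈ U, ∃ v ∈ V, t.1 * (u.1 * v.1) = s ∧ rle r (γ (t.2 * u.2 * v.2)) := by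
  constructor
  · rintro ⟨_, ⟨t, ht, _, ⟨u, hu, v, hv, rfl⟩, htuv⟩, hr⟩
    obtain ⟨rfl, rfl⟩ := Prod.mk.inj htuv
    exact ⟨t, ht, u, hu, v, hv, rfl, by rwa [mul_assoc]⟩
  · rintro ⟨t, ht, u, hu, v, hv, rfl, hr⟩
    exact ⟨_, ⟨t, ht, _, ⟨u, hu, v, hv, rfl⟩, rfl⟩, by rwa [← mul_assoc]⟩

theorem muMap_pmul_pmul_muMap [Mul M] [NonUnitalSemiring R] {γ : R → R}
    (hidem : ∀ r : R, r + r = r) (hγ : IsAddEndo γ)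
    (hγγ : ∀ q r s : R, γ (q * γ r * s) = γ (q * r * s))
    (T U V : Set (M × R)) :
    muMap γ (pmul T (pmul (muMap γ U) V)) = muMap γ (pmul T (pmul U V)) := by
  ext ⟨s, r⟩
  rw [mem_muMap_pmul_pmul, mem_muMap_pmul_pmul]
  constructor
  · rintro ⟨t, ht, u, ⟨q, hq, huq⟩, v, hv, hs, hr⟩
    refine ⟨t, ht, (u.1, q), hq, v, hv, hs, ?_⟩
    calc
      rle r (γ (t.2 * u.2 * v.2)) := hr
      rle _ (γ (t.2 * γ q * v.2)) := hγ.rle_map (rle.mul (rle.mul (hidem _) huq) (hidem _))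
      _ = γ (t.2 * q * v.2) := hγγ _ _ _
  · rintro ⟨t, ht, u, hu, v, hv, hs, hr⟩
    exact ⟨t, ht, (u.1, γ u.2), ⟨u.2, hu, hidem _⟩, v, hv, hs, by rwa [hγγ]⟩

section Tau

variable [Mul M] {𝒟 : LClass A} {α : List A → M}

theorem cat_preimage_inter_subset (hα : ∀ u v, α (u ++ v) = α u * α v) (s₁ s₂ : M)
    (K₁ K₂ : Lang A) :
    cat (α ⁻¹' {s₁} ∩ K₁) (α ⁻¹' {s₂} ∩ K₂) ⊆ α ⁻¹' {s₁ * s₂} ∩ cat K₁ K₂ := by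
  rintro _ ⟨u, ⟨rfl, hu⟩, v, ⟨rfl, hv⟩, rfl⟩
  exact ⟨hα u v, u, hu, v, hv, rfl⟩

theorem IsCCover.iUnion_image2_cat [Finite M] {K₁ K₂ : Lang A}
    (hcat : ∀ K L : Lang A, K ∈ 𝒟 → L ∈ 𝒟 → cat K L ∈ 𝒟)
    (hα : ∀ u v, α (u ++ v) = α u * α v) {C₁ C₂ : M → LClass A}
    (hC₁ : ∀ t, IsCCover 𝒟 (C₁ t) (α ⁻¹' {t} ∩ K₁))
    (hC₂ : ∀ t, IsCCover 𝒟 (C₂ t) (α ⁻¹' {t} ∩ K₂)) (s : M) :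
    IsCCover 𝒟 (⋃ p ∈ {p : M × M | p.1 * p.2 = s}, image2 cat (C₁ p.1) (C₂ p.2))
      (α ⁻¹' {s} ∩ cat K₁ K₂) := by
  refine ⟨⟨?_, ?_⟩, ?_⟩
  · exact (toFinite _).biUnion fun p _ => (hC₁ p.1).1.1.image2 _ (hC₂ p.2).1.1
  · rintro _ ⟨hs, u, hu, v, hv, rfl⟩
    obtain ⟨H₁, hH₁, huH₁⟩ := (hC₁ (α u)).1.2 ⟨rfl, hu⟩
    obtain ⟨H₂, hH₂, hvH₂⟩ := (hC₂ (α v)).1.2 ⟨rfl, hv⟩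
    have hp : (α u, α v) ∈ {p : M × M | p.1 * p.2 = s} := (hα u v).symm.trans hs
    exact ⟨cat H₁ H₂, mem_biUnion hp (mem_image2_of_mem hH₁ hH₂), u, huH₁, v, hvH₂, rfl⟩
  · refine iUnion₂_subset fun p _ => ?_
    rintro _ ⟨H₁, hH₁, H₂, hH₂, rfl⟩
    exact hcat H₁ H₂ ((hC₁ p.1).2 hH₁) ((hC₂ p.2).2 hH₂)

variable [NonUnitalNonAssocSemiring R] {ρ : Lang A → R} {γ : R → R}

theorem tauDp_cat_subset [Finite R] [Finite M] (hinter : FiniteInter 𝒟)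
    (hcat : ∀ K L : Lang A, K ∈ 𝒟 → L ∈ 𝒟 → cat K L ∈ 𝒟)
    (hα : ∀ u v, α (u ++ v) = α u * α v) (hρ : IsRatingMap ρ)
    (hργ : ∀ K L : Lang A, ρ (cat K L) = γ (ρ K * ρ L)) (K₁ K₂ : Lang A) :
    tauDp 𝒟 α ρ (cat K₁ K₂) ⊆ muMap γ (pmul (tauDp 𝒟 α ρ K₁) (tauDp 𝒟 α ρ K₂)) := by
  rintro ⟨s, r⟩ hr
  have hopt := exists_isCCover_imprint_subset_optImprint hinter hρ
  choose C₁ hC₁ hopt₁ using fun t : M => hopt (α ⁻¹' {t} ∩ K₁)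
  choose C₂ hC₂ hopt₂ using fun t : M => hopt (α ⁻¹' {t} ∩ K₂)
  obtain ⟨_, hH, hrH⟩ := hr _ (IsCCover.iUnion_image2_cat hcat hα hC₁ hC₂ s)
  obtain ⟨⟨s₁, s₂⟩, rfl, H₁, hH₁, H₂, hH₂, rfl⟩ := mem_iUnion₂.1 hH
  have hmem₁ : (s₁, ρ H₁) ∈ tauDp 𝒟 α ρ K₁ := hopt₁ s₁ (hρ.mem_imprint hH₁)
  have hmem₂ : (s₂, ρ H₂) ∈ tauDp 𝒟 α ρ K₂ := hopt₂ s₂ (hρ.mem_imprint hH₂)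
  exact ⟨ρ H₁ * ρ H₂, ⟨_, hmem₁, _, hmem₂, rfl⟩, by rwa [← hργ]⟩

theorem muMap_pmul_tauDp_subset (hinter : FiniteInter 𝒟) (hqc : QuotientClosed 𝒟)
    (hreg : ∀ L ∈ 𝒟, RegularLang L) (hα : ∀ u v, α (u ++ v) = α u * α v)
    (hρ : IsRatingMap ρ) (hγ : IsAddEndo γ)
    (hργ : ∀ K L : Lang A, ρ (cat K L) = γ (ρ K * ρ L)) (K₁ K₂ : Lang A) :
    muMap γ (pmul (tauDp 𝒟 α ρ K₁) (tauDp 𝒟 α ρ K₂)) ⊆ tauDp 𝒟 α ρ (cat K₁ K₂) := by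
  rintro ⟨s, r⟩ ⟨_, ⟨⟨s₁, r₁⟩, hr₁, ⟨s₂, r₂⟩, hr₂, hprod⟩, hr⟩
  obtain ⟨rfl, rfl⟩ := Prod.mk.inj hprod
  have hmem := map_mul_mem_optImprint_cat hinter hqc hreg hρ hγ hργ hr₁ hr₂
  exact mem_optImprint_of_rle hr
    (optImprint_mono (cat_preimage_inter_subset hα s₁ s₂ K₁ K₂) hmem)

end Tau

theorem statement13_general {A R M : Type} [Semiring R] [Finite R] [Mul M] [Finite M]
    (hidem : ∀ r : R, r + r = r) (𝒟 : LClass A) (hinter : FiniteInter 𝒟)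
    (hqc : QuotientClosed 𝒟) (hreg : ∀ L ∈ 𝒟, RegularLang L)
    (hcat : ∀ K L : Lang A, K ∈ 𝒟 → L ∈ 𝒟 → cat K L ∈ 𝒟)
    (α : List A → M) (hα : ∀ u v, α (u ++ v) = α u * α v)
    (ρ : Lang A → R) (hρ : IsRatingMap ρ) (γ : R → R) (hγ : IsQuasiMult ρ γ) :
    (muMap γ (∅ : Set (M × R)) = ∅ ∧
      ∀ T U : Set (M × R), muMap γ (T ∪ U) = muMap γ T ∪ muMap γ U) ∧
    (∀ T U V : Set (M × R),
      muMap γ (pmul T (pmul (muMap γ U) V)) = muMap γ (pmul T (pmul U V))) ∧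
    (∀ K₁ K₂ : Lang A,
      tauDp 𝒟 α ρ (cat K₁ K₂) =
        muMap γ (pmul (tauDp 𝒟 α ρ K₁) (tauDp 𝒟 α ρ K₂))) :=
  ⟨⟨muMap_empty γ, muMap_union γ⟩, muMap_pmul_pmul_muMap hidem hγ.1 hγ.2.1, fun K₁ K₂ =>
    (tauDp_cat_subset hinter hcat hα hρ hγ.2.2 K₁ K₂).antisymm
      (muMap_pmul_tauDp_subset hinter hqc hreg hα hρ hγ.1 hγ.2.2 K₁ K₂)⟩

/-- `τ_{𝒟,α,ρ}` is quasi-multiplicative for `μ`. -/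
theorem statement13 {A R M : Type} [Fintype A] [Semiring R] [Finite R]
    [Monoid M] [Finite M] (hidem : ∀ r : R, r + r = r)
    (𝒟 : LClass A) (hlat : LangLattice 𝒟) (hqc : QuotientClosed 𝒟)
    (hreg : ∀ L ∈ 𝒟, RegularLang L)
    (hcat : ∀ K L : Lang A, K ∈ 𝒟 → L ∈ 𝒟 → cat K L ∈ 𝒟)
    (α : List A → M) (hα : IsMonoidMorphism α)
    (ρ : Lang A → R) (hρ : IsRatingMap ρ) (γ : R → R) (hγ : IsQuasiMult ρ γ) :
    (muMap γ (∅ : Set (M × R)) = ∅ ∧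
      ∀ T U : Set (M × R), muMap γ (T ∪ U) = muMap γ T ∪ muMap γ U) ∧
    (∀ T U V : Set (M × R),
      muMap γ (pmul T (pmul (muMap γ U) V)) = muMap γ (pmul T (pmul U V))) ∧
    (∀ K₁ K₂ : Lang A,
      tauDp 𝒟 α ρ (cat K₁ K₂) =
        muMap γ (pmul (tauDp 𝒟 α ρ K₁) (tauDp 𝒟 α ρ K₂))) :=
  statement13_general hidem 𝒟 hlat.finiteInter hqc hreg hcat α hα.2 ρ hρ γ hγ

end Paper
end
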